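/- Fix α > 0 and δ ∈ (0,1). Under assumptions (A1)–(A6), with probability at least 1−δ over the datasets, the PRO-RL output ŵ satisfies L_α(v*_α, w*_α) − L_α(v*_α, ŵ) ≤ 2·ε_stat. -/

import Mathlib

open MeasureTheory
open scoped BigOperators ENNReal

namespace ProRL

/-- The discrete measure on a type induced by a real-valued weight function. -/
noncomputable def discMeasure {X : Type*} [MeasurableSpace X] (p : X → ℝ) : Measure X :=
  Measure.sum fun x => ENNReal.ofReal (p x) • Measure.dirac x

variable {S A : Type*} [Fintype S] [Fintype A]

/-- The `t`-step state-action distribution of policy `π` started from `μ0`. -/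
noncomputable def saDist (P : S → A → S → ℝ) (μ0 : S → ℝ) (π : S → A → ℝ) :
    ℕ → S → A → ℝ
  | 0 => fun s a => μ0 s * π s a
  | t + 1 => fun s a =>
      (∑ s' : S, ∑ a' : A, saDist P μ0 π t s' a' * P s' a' s) * π s a

/-- The discounted state-action occupancy `d^π(s,a)`. -/
noncomputable def occ (P : S → A → S → ℝ) (μ0 : S → ℝ) (γ : ℝ) (π : S → A → ℝ)
    (s : S) (a : A) : ℝ :=
  (1 - γ) * ∑' t : ℕ, γ ^ t * saDist P μ0 π t s a

/-- The (normalized) expected discounted return `J(π) = E_{d^π}[r]`. -/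
noncomputable def Jret (P : S → A → S → ℝ) (r : S → A → ℝ) (μ0 : S → ℝ) (γ : ℝ)
    (π : S → A → ℝ) : ℝ :=
  ∑ s : S, ∑ a : A, occ P μ0 γ π s a * r s a

/-- `π` is a (stationary, stochastic) policy. -/
def IsPolicy (π : S → A → ℝ) : Prop :=
  (∀ s a, 0 ≤ π s a) ∧ ∀ s, ∑ a : A, π s a = 1

/-- The Bellman residual `e_v(s,a) = r(s,a) + γ ∑_{s'} P(s'|s,a) v(s') − v(s)`. -/
noncomputable def eV (P : S → A → S → ℝ) (r : S → A → ℝ) (γ : ℝ) (v : S → ℝ)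
    (s : S) (a : A) : ℝ :=
  r s a + γ * ∑ s' : S, P s a s' * v s' - v s

/-- The population Lagrangian `L_α(v,w)`. -/
noncomputable def Lag (P : S → A → S → ℝ) (r : S → A → ℝ) (μ0 : S → ℝ) (γ : ℝ)
    (dD : S → A → ℝ) (f : ℝ → ℝ) (α : ℝ) (v : S → ℝ) (w : S → A → ℝ) : ℝ :=
  (1 - γ) * ∑ s : S, μ0 s * v s
    - α * ∑ s : S, ∑ a : A, dD s a * f (w s a)
    + ∑ s : S, ∑ a : A, dD s a * (w s a * eV P r γ v s a)

/-- The empirical Lagrangian `L̂_α(v,w)` built from the transition dataset `D`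
(`D i = ((sᵢ,aᵢ), s'ᵢ)`, with `rᵢ = r sᵢ aᵢ`) and initial-state dataset `D0`. -/
noncomputable def empLag (r : S → A → ℝ) (γ : ℝ) (f : ℝ → ℝ) (α : ℝ) {n n0 : ℕ}
    (D : Fin n → (S × A) × S) (D0 : Fin n0 → S) (v : S → ℝ) (w : S → A → ℝ) : ℝ :=
  (1 - γ) * ((n0 : ℝ)⁻¹ * ∑ j : Fin n0, v (D0 j))
    - α * ((n : ℝ)⁻¹ * ∑ i : Fin n, f (w (D i).1.1 (D i).1.2))
    + (n : ℝ)⁻¹ * ∑ i : Fin n,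
        w (D i).1.1 (D i).1.2 *
          (r (D i).1.1 (D i).1.2 + γ * v (D i).2 - v (D i).1.1)

/-- Per-state normalization of a state-action weight into a policy
(uniform where the state marginal is not positive). -/
noncomputable def normPolicy (d : S → A → ℝ) (s : S) (a : A) : ℝ :=
  if 0 < ∑ a' : A, d s a' then d s a / ∑ a' : A, d s a'
  else (Fintype.card A : ℝ)⁻¹

/-- Policy extraction from a density ratio `w` and a behavior policy `piD`
(uniform where the normalizer vanishes). -/
noncomputable def extractPolicy (piD w : S → A → ℝ) (s : S) (a : A) : ℝ :=
  if 0 < ∑ a' : A, w s a' * piD s a' then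
    w s a * piD s a / ∑ a' : A, w s a' * piD s a'
  else (Fintype.card A : ℝ)⁻¹

/-- Behavior policy `π_D(a|s)` obtained from the data distribution `d^D`. -/
noncomputable def behPolicy (dD : S → A → ℝ) : S → A → ℝ := normPolicy dD

/-- The state-action measure `d(s,a) = w(s,a)·d^D(s,a)`. -/
noncomputable def dstar (dD w : S → A → ℝ) : S → A → ℝ := fun s a => w s a * dD s a

/-- The weighted `L²(d^D)` norm of a state-action function. -/
noncomputable def l2nrm (dD g : S → A → ℝ) : ℝ :=
  Real.sqrt (∑ s : S, ∑ a : A, dD s a * g s a ^ 2)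

/-- `‖π(·|s) − π'(·|s)‖₁`. -/
noncomputable def l1Pol (π π' : S → A → ℝ) (s : S) : ℝ := ∑ a : A, |π s a - π' s a|

/-- `E_{s ∼ d}[‖π(·|s) − π'(·|s)‖₁]` where `d` is a state-action distribution. -/
noncomputable def expL1 (d π π' : S → A → ℝ) : ℝ :=
  ∑ s : S, (∑ a : A, d s a) * l1Pol π π' s

/-- The statistical error term `ε_stat`. -/
noncomputable def epsStat (γ α Bv Bf Bw Be δ : ℝ) (nV nW n n0 : ℕ) : ℝ :=
  (1 - γ) * Bv * Real.sqrt (2 * Real.log (4 * (nV : ℝ) / δ) / (n0 : ℝ))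
    + (α * Bf + Bw * Be) *
        Real.sqrt (2 * Real.log (4 * ((nV : ℝ) * (nW : ℝ)) / δ) / (n : ℝ))

/-- The Bellman flow equations for a state-action measure `d`. -/
def BellmanFlow (P : S → A → S → ℝ) (μ0 : S → ℝ) (γ : ℝ) (d : S → A → ℝ) : Prop :=
  ∀ s : S, ∑ a : A, d s a
    = (1 - γ) * μ0 s + γ * ∑ s' : S, ∑ a' : A, P s' a' s * d s' a'

/-- `(v,w)` is a saddle point of `max_{w ≥ 0} min_v L_α(v,w)`. -/
def IsSaddle (P : S → A → S → ℝ) (r : S → A → ℝ) (μ0 : S → ℝ) (γ : ℝ)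
    (dD : S → A → ℝ) (f : ℝ → ℝ) (α : ℝ) (v : S → ℝ) (w : S → A → ℝ) : Prop :=
  (∀ s a, 0 ≤ w s a) ∧
  (∀ v' : S → ℝ, Lag P r μ0 γ dD f α v w ≤ Lag P r μ0 γ dD f α v' w) ∧
  (∀ w' : S → A → ℝ, (∀ s a, 0 ≤ w' s a) →
    Lag P r μ0 γ dD f α v w' ≤ Lag P r μ0 γ dD f α v w)

/-- `(v,w)` is a saddle point of `max_{0 ≤ w ≤ Bw} min_v L_α(v,w)` (constrained LP). -/
def IsSaddleB (P : S → A → S → ℝ) (r : S → A → ℝ) (μ0 : S → ℝ) (γ : ℝ)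
    (dD : S → A → ℝ) (f : ℝ → ℝ) (α Bw : ℝ) (v : S → ℝ) (w : S → A → ℝ) : Prop :=
  (∀ s a, 0 ≤ w s a ∧ w s a ≤ Bw) ∧
  (∀ v' : S → ℝ, Lag P r μ0 γ dD f α v w ≤ Lag P r μ0 γ dD f α v' w) ∧
  (∀ w' : S → A → ℝ, (∀ s a, 0 ≤ w' s a ∧ w' s a ≤ Bw) →
    Lag P r μ0 γ dD f α v w' ≤ Lag P r μ0 γ dD f α v w)

/-- `(vhat, what)` is an exact max-min point of the empirical Lagrangian over `V × W`:
`vhat ∈ argmin_{v ∈ V} L̂(v, what)` and `what ∈ argmax_{w ∈ W} min_{v ∈ V} L̂(v, w)`. -/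
def IsProRLOutput (r : S → A → ℝ) (γ : ℝ) (f : ℝ → ℝ) (α : ℝ)
    (V : Finset (S → ℝ)) (W : Finset (S → A → ℝ)) {n n0 : ℕ}
    (D : Fin n → (S × A) × S) (D0 : Fin n0 → S)
    (vhat : S → ℝ) (what : S → A → ℝ) : Prop :=
  vhat ∈ V ∧ what ∈ W ∧
  (∀ v ∈ V, empLag r γ f α D D0 vhat what ≤ empLag r γ f α D D0 v what) ∧
  ∀ w ∈ W, ∀ vw ∈ V,
    (∀ v ∈ V, empLag r γ f α D D0 vw w ≤ empLag r γ f α D D0 v w) →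
      empLag r γ f α D D0 vw w ≤ empLag r γ f α D D0 vhat what

/-- Weight of a transition tuple `((s,a),s')` under `(s,a) ∼ d^D`, `s' ∼ P(·|s,a)`. -/
noncomputable def tupleWeight (P : S → A → S → ℝ) (dD : S → A → ℝ)
    (x : (S × A) × S) : ℝ :=
  dD x.1.1 x.1.2 * P x.1.1 x.1.2 x.2

/-- The joint law of the transition dataset `D` (i.i.d. from `d^D ⊗ P`) and the
initial-state dataset `D0` (i.i.d. from `μ0`). -/
noncomputable def dataMeasure [MeasurableSpace S] [MeasurableSpace A]
    (P : S → A → S → ℝ) (dD : S → A → ℝ) (μ0 : S → ℝ) (n n0 : ℕ) :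
    Measure ((Fin n → (S × A) × S) × (Fin n0 → S)) :=
  (Measure.pi fun _ : Fin n => discMeasure (tupleWeight P dD)).prod
    (Measure.pi fun _ : Fin n0 => discMeasure μ0)

/-- The joint law of datasets `D1`, `D2` (both i.i.d. from `d^D ⊗ P`) and `D0`
(i.i.d. from `μ0`), used by PRO-RL-BC. -/
noncomputable def dataMeasure3 [MeasurableSpace S] [MeasurableSpace A]
    (P : S → A → S → ℝ) (dD : S → A → ℝ) (μ0 : S → ℝ) (n1 n2 n0 : ℕ) :
    Measure ((Fin n1 → (S × A) × S) × (Fin n2 → (S × A) × S) × (Fin n0 → S)) :=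
  (Measure.pi fun _ : Fin n1 => discMeasure (tupleWeight P dD)).prod
    ((Measure.pi fun _ : Fin n2 => discMeasure (tupleWeight P dD)).prod
      (Measure.pi fun _ : Fin n0 => discMeasure μ0))

/-- `v` is the optimal value function: it satisfies the Bellman optimality equation. -/
def IsOptValue [Nonempty A] (P : S → A → S → ℝ) (r : S → A → ℝ) (γ : ℝ)
    (v : S → ℝ) : Prop :=
  ∀ s : S, v s = Finset.univ.sup' Finset.univ_nonempty
    (fun a : A => r s a + γ * ∑ s' : S, P s a s' * v s')

/-- Basic assumptions on the MDP, the regularizer-free data, and the data distribution. -/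
structure MDPAssumptions (P : S → A → S → ℝ) (r : S → A → ℝ) (μ0 : S → ℝ) (γ : ℝ)
    (dD : S → A → ℝ) : Prop where
  P_nonneg : ∀ s a s', 0 ≤ P s a s'
  P_sum : ∀ s a, ∑ s' : S, P s a s' = 1
  r_nonneg : ∀ s a, 0 ≤ r s a
  r_le_one : ∀ s a, r s a ≤ 1
  γ_nonneg : 0 ≤ γ
  γ_lt_one : γ < 1
  μ0_pos : ∀ s, 0 < μ0 s
  μ0_sum : ∑ s : S, μ0 s = 1
  dD_nonneg : ∀ s a, 0 ≤ dD s a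
  dD_sum : ∑ s : S, ∑ a : A, dD s a = 1

/-- Regularity of the regularizer `f`: continuously differentiable with derivative `f'`,
`M_f`-strongly convex, and with `|f'| ≤ Bf'`, `|f| ≤ Bf` on `[0, Bw]`. -/
structure RegAssumptions (f f' : ℝ → ℝ) (Mf Bw Bf' Bf : ℝ) : Prop where
  deriv : ∀ x, HasDerivAt f (f' x) x
  strong : StrongConvexOn Set.univ Mf f
  Mf_pos : 0 < Mf
  f'_bdd : ∀ x, 0 ≤ x → x ≤ Bw → |f' x| ≤ Bf'
  f_bdd : ∀ x, 0 ≤ x → x ≤ Bw → |f x| ≤ Bf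

/-- `w` is an optimal density ratio of the unregularized LP (the set `W*₀`). -/
def OptRatio (P : S → A → S → ℝ) (r : S → A → ℝ) (μ0 : S → ℝ) (γ : ℝ)
    (dD : S → A → ℝ) (w : S → A → ℝ) : Prop :=
  (∀ s a, 0 ≤ w s a) ∧ BellmanFlow P μ0 γ (dstar dD w) ∧
  ∀ w' : S → A → ℝ, (∀ s a, 0 ≤ w' s a) → BellmanFlow P μ0 γ (dstar dD w') →
    ∑ s : S, ∑ a : A, dstar dD w' s a * r s a
      ≤ ∑ s : S, ∑ a : A, dstar dD w s a * r s a

section Concentration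

open ProbabilityTheory

variable {X : Type*} [MeasurableSpace X]

/-- One-sided Hoeffding inequality for the empirical mean of a bounded function. -/
theorem measureReal_pi_mean_sub_integral_ge_le (μ : Measure X) [IsProbabilityMeasure μ]
    {g : X → ℝ} (hg : Measurable g) {B : ℝ} (hB : ∀ x, |g x| ≤ B) {n : ℕ} (hn : 0 < n)
    {t : ℝ} (ht : 0 ≤ t) :
    (Measure.pi fun _ : Fin n => μ).real
        {D | t ≤ (n : ℝ)⁻¹ * ∑ i, g (D i) - ∫ x, g x ∂μ}
      ≤ Real.exp (-(n * t ^ 2) / (2 * B ^ 2)) := by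
  have hn' : (0 : ℝ) < n := by exact_mod_cast hn
  have hsub := hasSubgaussianMGF_of_mem_Icc (μ := μ) (a := -B) (b := B) hg.aemeasurable
    (Filter.Eventually.of_forall fun x => abs_le.1 (hB x))
  have hind : iIndepFun (fun (i : Fin n) (D : Fin n → X) => g (D i) - ∫ x, g x ∂μ)
      (Measure.pi fun _ : Fin n => μ) :=
    iIndepFun_pi (X := fun _ x => g x - ∫ x, g x ∂μ) fun _ => (hg.sub_const _).aemeasurable
  have hsubpi : ∀ i ∈ (Finset.univ : Finset (Fin n)),
      HasSubgaussianMGF (fun D : Fin n → X => g (D i) - ∫ x, g x ∂μ)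
        ((‖B - -B‖₊ / 2) ^ 2) (Measure.pi fun _ : Fin n => μ) := fun i _ =>
    HasSubgaussianMGF.of_map (Y := Function.eval i) (measurable_pi_apply i).aemeasurable
      (by rwa [(measurePreserving_eval (fun _ : Fin n => μ) i).map_eq])
  have key := HasSubgaussianMGF.measure_sum_ge_le_of_iIndepFun hind hsubpi
    (ε := n * t) (by positivity)
  have hset : {D : Fin n → X | t ≤ (n : ℝ)⁻¹ * ∑ i, g (D i) - ∫ x, g x ∂μ}
      = {D | n * t ≤ ∑ i, (g (D i) - ∫ x, g x ∂μ)} := by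
    ext D
    have hsum : ∑ i, (g (D i) - ∫ x, g x ∂μ)
        = n * ((n : ℝ)⁻¹ * ∑ i, g (D i) - ∫ x, g x ∂μ) := by
      simp only [Finset.sum_sub_distrib, Finset.sum_const, Finset.card_univ, Fintype.card_fin,
        nsmul_eq_mul]
      field_simp
    rw [Set.mem_ofPred_eq, Set.mem_ofPred_eq, hsum, mul_le_mul_iff_right₀ hn']
  rw [hset]
  refine key.trans_eq ?_
  congr 1
  have hsq : ((‖B - -B‖ / 2) ^ 2 : ℝ) = B ^ 2 := by
    rw [Real.norm_eq_abs, div_pow, sq_abs]; ring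
  simp only [Finset.sum_const, Finset.card_univ, Fintype.card_fin, nsmul_eq_mul, NNReal.coe_mul,
    NNReal.coe_natCast, NNReal.coe_pow, NNReal.coe_div, coe_nnnorm, NNReal.coe_ofNat, hsq]
  rcases eq_or_ne B 0 with rfl | hB0
  · simp
  · field_simp

/-- Two-sided Hoeffding inequality at confidence level `2 * exp (-L)`. -/
theorem measureReal_pi_abs_mean_sub_integral_gt_le (μ : Measure X) [IsProbabilityMeasure μ]
    {g : X → ℝ} (hg : Measurable g) {B : ℝ} (hB : ∀ x, |g x| ≤ B) {n : ℕ} (hn : 0 < n)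
    {L : ℝ} (hL : 0 ≤ L) :
    (Measure.pi fun _ : Fin n => μ).real
        {D | B * √(2 * L / n) < |(n : ℝ)⁻¹ * ∑ i, g (D i) - ∫ x, g x ∂μ|}
      ≤ 2 * Real.exp (-L) := by
  have hn' : (0 : ℝ) < n := by exact_mod_cast hn
  obtain ⟨x₀⟩ := μ.nonempty_of_neZero
  have hB0 : 0 ≤ B := (abs_nonneg _).trans (hB x₀)
  rcases hB0.eq_or_lt with rfl | hBpos
  · have hg0 : ∀ x, g x = 0 := fun x => abs_nonpos_iff.1 (hB x)
    simp only [hg0, Finset.sum_const_zero, integral_zero, mul_zero, sub_zero, abs_zero, zero_mul,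
      lt_irrefl, Set.ofPred_false, measureReal_empty]
    positivity
  set t := B * √(2 * L / n) with ht_def
  have ht : 0 ≤ t := by positivity
  have hexp : -(n * t ^ 2) / (2 * B ^ 2) = -L := by
    rw [ht_def, mul_pow, Real.sq_sqrt (by positivity)]
    field_simp
  have hupper := measureReal_pi_mean_sub_integral_ge_le μ hg hB hn ht
  have hlower := measureReal_pi_mean_sub_integral_ge_le μ hg.neg
    (fun x => (abs_neg (g x)).trans_le (hB x)) hn ht
  rw [hexp] at hupper hlower
  calc _ ≤ _ := measureReal_mono (fun D hD => ?_)
    _ ≤ _ := measureReal_union_le _ _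
    _ ≤ Real.exp (-L) + Real.exp (-L) := add_le_add hupper hlower
    _ = _ := by ring
  rcases lt_abs.1 (show t < |_| from hD) with h | h
  · exact Or.inl h.le
  · refine Or.inr ?_
    simp only [Set.mem_ofPred_eq, Pi.neg_apply, Finset.sum_neg_distrib, integral_neg]
    linarith

/-- Hoeffding inequality uniformly over a finite family of bounded functions. -/
theorem measureReal_pi_exists_abs_mean_sub_integral_gt_le {ι : Type*} (s : Finset ι)
    (hs : s.Nonempty) (μ : Measure X) [IsProbabilityMeasure μ]
    {g : ι → X → ℝ} (hg : ∀ k, Measurable (g k)) {B : ℝ} (hB : ∀ k ∈ s, ∀ x, |g k x| ≤ B)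
    {n : ℕ} (hn : 0 < n) {η : ℝ} (hη : 0 < η) (hη2 : η ≤ 2) :
    (Measure.pi fun _ : Fin n => μ).real
        {D | ∃ k ∈ s, B * √(2 * Real.log (2 * s.card / η) / n)
          < |(n : ℝ)⁻¹ * ∑ i, g k (D i) - ∫ x, g k x ∂μ|}
      ≤ η := by
  have hcard : (1 : ℝ) ≤ s.card := by exact_mod_cast hs.card_pos
  have hL : 0 ≤ Real.log (2 * s.card / η) := by
    apply Real.log_nonneg
    rw [one_le_div hη]
    linarith
  calc _ = (Measure.pi fun _ : Fin n => μ).real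
        (⋃ k ∈ s, {D | B * √(2 * Real.log (2 * s.card / η) / n)
          < |(n : ℝ)⁻¹ * ∑ i, g k (D i) - ∫ x, g k x ∂μ|}) := by
        congr 1
        ext D
        simp
    _ ≤ _ := measureReal_biUnion_finset_le _ _
    _ ≤ ∑ _k ∈ s, 2 * Real.exp (-Real.log (2 * s.card / η)) :=
        Finset.sum_le_sum fun k hk =>
          measureReal_pi_abs_mean_sub_integral_gt_le μ (hg k) (hB k hk) hn hL
    _ = η := by
        rw [Real.exp_neg, Real.exp_log (by positivity), Finset.sum_const, nsmul_eq_mul]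
        field_simp

end Concentration

section DiscreteMeasure

variable {X : Type*} [Fintype X] [MeasurableSpace X]

theorem isProbabilityMeasure_discMeasure {p : X → ℝ} (hp : ∀ x, 0 ≤ p x) (hsum : ∑ x, p x = 1) :
    IsProbabilityMeasure (discMeasure p) := by
  refine ⟨?_⟩
  simp [discMeasure, ← ENNReal.ofReal_sum_of_nonneg fun x _ => hp x, hsum]

theorem integral_discMeasure [MeasurableSingletonClass X] {p : X → ℝ} (hp : ∀ x, 0 ≤ p x)
    (g : X → ℝ) : ∫ x, g x ∂(discMeasure p) = ∑ x, p x * g x := by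
  rw [discMeasure, Measure.sum_fintype, integral_finsetSum_measure]
  · simp [hp]
  · intro x _
    exact (integrable_dirac (by simp)).smul_measure ENNReal.ofReal_ne_top

end DiscreteMeasure

section Lagrangian

variable {P : S → A → S → ℝ} {r : S → A → ℝ} {μ0 : S → ℝ} {γ : ℝ} {dD : S → A → ℝ}

theorem tupleWeight_nonneg (hMDP : MDPAssumptions P r μ0 γ dD) (x : (S × A) × S) :
    0 ≤ tupleWeight P dD x :=
  mul_nonneg (hMDP.dD_nonneg _ _) (hMDP.P_nonneg _ _ _)

theorem sum_tupleWeight (hMDP : MDPAssumptions P r μ0 γ dD) :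
    ∑ x, tupleWeight P dD x = 1 := by
  simp only [tupleWeight, Fintype.sum_prod_type, ← Finset.mul_sum, hMDP.P_sum, mul_one,
    hMDP.dD_sum]

/-- The contribution of a single transition tuple to the empirical Lagrangian. -/
noncomputable def tupleLag (r : S → A → ℝ) (γ : ℝ) (f : ℝ → ℝ) (α : ℝ) (v : S → ℝ)
    (w : S → A → ℝ) (x : (S × A) × S) : ℝ :=
  w x.1.1 x.1.2 * (r x.1.1 x.1.2 + γ * v x.2 - v x.1.1) - α * f (w x.1.1 x.1.2)

theorem empLag_eq_mean {S A : Type*} (r : S → A → ℝ) (γ : ℝ) (f : ℝ → ℝ) (α : ℝ) {n n0 : ℕ}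
    (D : Fin n → (S × A) × S) (D0 : Fin n0 → S) (v : S → ℝ) (w : S → A → ℝ) :
    empLag r γ f α D D0 v w
      = (1 - γ) * ((n0 : ℝ)⁻¹ * ∑ j, v (D0 j))
        + (n : ℝ)⁻¹ * ∑ i, tupleLag r γ f α v w (D i) := by
  simp only [empLag, tupleLag, Finset.sum_sub_distrib, ← Finset.mul_sum]
  ring

theorem Lag_eq_integral [MeasurableSpace S] [MeasurableSpace A] [MeasurableSingletonClass S]
    [MeasurableSingletonClass A] (hMDP : MDPAssumptions P r μ0 γ dD) (f : ℝ → ℝ) (α : ℝ)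
    (v : S → ℝ) (w : S → A → ℝ) :
    Lag P r μ0 γ dD f α v w
      = (1 - γ) * ∫ s, v s ∂(discMeasure μ0)
        + ∫ x, tupleLag r γ f α v w x ∂(discMeasure (tupleWeight P dD)) := by
  rw [integral_discMeasure fun s => (hMDP.μ0_pos s).le,
    integral_discMeasure (tupleWeight_nonneg hMDP), Lag, sub_add, sub_eq_add_neg]
  congr 1
  simp only [Fintype.sum_prod_type, Finset.mul_sum, ← Finset.sum_sub_distrib,
    ← Finset.sum_neg_distrib]
  refine Finset.sum_congr rfl fun s _ => Finset.sum_congr rfl fun a _ => ?_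
  have hterm : ∀ s', tupleWeight P dD ((s, a), s') * tupleLag r γ f α v w ((s, a), s')
      = (dD s a * (w s a * (r s a - v s) - α * f (w s a))) * P s a s'
        + (dD s a * (w s a * γ)) * (P s a s' * v s') := fun s' => by
    simp only [tupleWeight, tupleLag]
    ring
  simp only [hterm, Finset.sum_add_distrib, ← Finset.mul_sum, hMDP.P_sum, eV]
  ring

theorem abs_tupleLag_le (hMDP : MDPAssumptions P r μ0 γ dD) {f : ℝ → ℝ} {α Bw Bf Bv : ℝ}
    (hα : 0 ≤ α) (hf : ∀ x, 0 ≤ x → x ≤ Bw → |f x| ≤ Bf) {v : S → ℝ} (hv : ∀ s, |v s| ≤ Bv)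
    {w : S → A → ℝ} (hw : ∀ s a, 0 ≤ w s a ∧ w s a ≤ Bw) (x : (S × A) × S) :
    |tupleLag r γ f α v w x| ≤ α * Bf + Bw * ((1 + γ) * Bv + 1) := by
  obtain ⟨⟨s, a⟩, s'⟩ := x
  obtain ⟨hw0, hw1⟩ := hw s a
  have hres : |r s a + γ * v s' - v s| ≤ (1 + γ) * Bv + 1 := by
    have h1 := abs_le.1 (hv s)
    have h2 := abs_le.1 (hv s')
    have h3 := hMDP.r_nonneg s a
    have h4 := hMDP.r_le_one s a
    have h5 := mul_le_mul_of_nonneg_left h2.1 hMDP.γ_nonneg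
    have h6 := mul_le_mul_of_nonneg_left h2.2 hMDP.γ_nonneg
    rw [abs_le]
    constructor <;> linarith
  calc |tupleLag r γ f α v w ((s, a), s')|
      ≤ |w s a * (r s a + γ * v s' - v s)| + |α * f (w s a)| := abs_sub _ _
    _ = α * |f (w s a)| + w s a * |r s a + γ * v s' - v s| := by
        rw [abs_mul, abs_mul, abs_of_nonneg hw0, abs_of_nonneg hα, add_comm]
    _ ≤ α * Bf + Bw * ((1 + γ) * Bv + 1) :=
        add_le_add (mul_le_mul_of_nonneg_left (hf _ hw0 hw1) hα)
          (mul_le_mul hw1 hres (abs_nonneg _) (hw0.trans hw1))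

/-- If the empirical Lagrangian is uniformly `ε`-close to the population one on `V × W`, then the
max-min output has suboptimality at most `2 * ε` at the saddle point. -/
theorem Lag_sub_Lag_le_of_uniform_close {f : ℝ → ℝ} {α ε : ℝ} {vst : S → ℝ} {wst : S → A → ℝ}
    (hmin : ∀ v, Lag P r μ0 γ dD f α vst wst ≤ Lag P r μ0 γ dD f α v wst)
    {V : Finset (S → ℝ)} {W : Finset (S → A → ℝ)} (hvst : vst ∈ V) (hwst : wst ∈ W) {n n0 : ℕ}
    {D : Fin n → (S × A) × S} {D0 : Fin n0 → S} {vhat : S → ℝ} {what : S → A → ℝ}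
    (hout : IsProRLOutput r γ f α V W D D0 vhat what)
    (hclose : ∀ v ∈ V, ∀ w ∈ W,
      |empLag r γ f α D D0 v w - Lag P r μ0 γ dD f α v w| ≤ ε) :
    Lag P r μ0 γ dD f α vst wst - Lag P r μ0 γ dD f α vst what ≤ 2 * ε := by
  obtain ⟨-, hwhat, hvhat_min, hmax⟩ := hout
  obtain ⟨u, huV, hu⟩ := V.exists_min_image (fun v => empLag r γ f α D D0 v wst) ⟨vst, hvst⟩
  have h1 := hmin u
  have h2 := (abs_le.1 (hclose u huV wst hwst)).1
  have h3 := hmax wst hwst u huV hu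
  have h4 := hvhat_min vst hvst
  have h5 := (abs_le.1 (hclose vst hvst what hwhat)).2
  linarith

end Lagrangian

/-- Lemma 7: `L_α(v*_α, w*_α) − L_α(v*_α, ŵ) ≤ 2 ε_stat`. -/
theorem stmt15
    {S A : Type*} [Fintype S] [Fintype A] [Nonempty S] [Nonempty A]
    [MeasurableSpace S] [MeasurableSpace A]
    [MeasurableSingletonClass S] [MeasurableSingletonClass A]
    (P : S → A → S → ℝ) (r : S → A → ℝ) (μ0 : S → ℝ) (γ : ℝ) (dD : S → A → ℝ)
    (hMDP : MDPAssumptions P r μ0 γ dD)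
    (f f' : ℝ → ℝ) (α δ : ℝ) (hα : 0 < α) (hδ0 : 0 < δ) (hδ1 : δ < 1)
    (Mf Bw Bf' Bf Bv Be : ℝ)
    (hreg : RegAssumptions f f' Mf Bw Bf' Bf) (hfnn : ∀ x, 0 ≤ f x)
    (hBv : Bv = (α * Bf' + 1) / (1 - γ)) (hBe : Be = (1 + γ) * Bv + 1)
    (vst : S → ℝ) (wst : S → A → ℝ)
    (hsad : IsSaddle P r μ0 γ dD f α vst wst)
    (V : Finset (S → ℝ)) (W : Finset (S → A → ℝ))
    (hA1 : ∀ s a, dstar dD wst s a ≤ Bw * dD s a)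
    (hA2 : vst ∈ V) (hA3 : wst ∈ W)
    (hA4 : ∀ w ∈ W, ∀ s a, 0 ≤ w s a ∧ w s a ≤ Bw)
    (hA6 : ∀ v ∈ V, ∀ s, |v s| ≤ Bv)
    (n n0 : ℕ) (hn : 0 < n) (hn0 : 0 < n0)
    (vhat : (Fin n → (S × A) × S) × (Fin n0 → S) → S → ℝ)
    (what : (Fin n → (S × A) × S) × (Fin n0 → S) → S → A → ℝ)
    (halg : ∀ ω, IsProRLOutput r γ f α V W ω.1 ω.2 (vhat ω) (what ω)) :
    1 - ENNReal.ofReal δ ≤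
      dataMeasure P dD μ0 n n0 {ω |
        Lag P r μ0 γ dD f α vst wst - Lag P r μ0 γ dD f α vst (what ω)
          ≤ 2 * epsStat γ α Bv Bf Bw Be δ V.card W.card n n0 } := by
  have : IsProbabilityMeasure (discMeasure μ0) :=
    isProbabilityMeasure_discMeasure (fun s => (hMDP.μ0_pos s).le) hMDP.μ0_sum
  have : IsProbabilityMeasure (discMeasure (tupleWeight P dD)) :=
    isProbabilityMeasure_discMeasure (tupleWeight_nonneg hMDP) (sum_tupleWeight hMDP)
  have : IsProbabilityMeasure (dataMeasure P dD μ0 n n0) := by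
    unfold dataMeasure
    infer_instance
  have hinit := measureReal_pi_exists_abs_mean_sub_integral_gt_le V ⟨vst, hA2⟩ (discMeasure μ0)
    (g := fun v => v) (fun _ => .of_discrete) (B := Bv) hA6 hn0 (half_pos hδ0) (by linarith)
  have htrans := measureReal_pi_exists_abs_mean_sub_integral_gt_le (V ×ˢ W)
    ⟨(vst, wst), Finset.mk_mem_product hA2 hA3⟩ (discMeasure (tupleWeight P dD))
    (g := fun k => tupleLag r γ f α k.1 k.2) (fun _ => .of_discrete)
    (B := α * Bf + Bw * Be) (fun k hk x => by
      rw [Finset.mem_product] at hk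
      rw [hBe]
      exact abs_tupleLag_le hMDP hα.le hreg.f_bdd (hA6 _ hk.1) (hA4 _ hk.2) x)
    hn (half_pos hδ0) (by linarith)
  have hlogarg : ∀ c : ℝ, 2 * c / (δ / 2) = 4 * c / δ := fun c => by
    ring
  simp only [Finset.card_product, Nat.cast_mul, hlogarg] at hinit htrans
  set badInit := {D0 : Fin n0 → S | ∃ v ∈ V,
    Bv * √(2 * Real.log (4 * V.card / δ) / n0)
      < |(n0 : ℝ)⁻¹ * ∑ j, v (D0 j) - ∫ s, v s ∂(discMeasure μ0)|} with hbadInit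
  set badTrans := {D : Fin n → (S × A) × S | ∃ k ∈ V ×ˢ W,
    (α * Bf + Bw * Be) * √(2 * Real.log (4 * (V.card * W.card) / δ) / n)
      < |(n : ℝ)⁻¹ * ∑ i, tupleLag r γ f α k.1 k.2 (D i)
          - ∫ x, tupleLag r γ f α k.1 k.2 x ∂(discMeasure (tupleWeight P dD))|} with hbadTrans
  set good := {ω : (Fin n → (S × A) × S) × (Fin n0 → S) |
    Lag P r μ0 γ dD f α vst wst - Lag P r μ0 γ dD f α vst (what ω)
      ≤ 2 * epsStat γ α Bv Bf Bw Be δ V.card W.card n n0}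
  have hsub : goodᶜ ⊆ badTrans ×ˢ Set.univ ∪ Set.univ ×ˢ badInit := by
    intro ω hω
    by_contra hnot
    refine hω (Lag_sub_Lag_le_of_uniform_close hsad.2.1 hA2 hA3 (halg ω) fun v hv w hw => ?_)
    simp only [Set.mem_union, Set.mem_prod, Set.mem_univ, and_true, true_and, not_or] at hnot
    obtain ⟨hT, hI⟩ := hnot
    simp only [hbadTrans, hbadInit, Set.mem_ofPred_eq, not_exists, not_and, not_lt] at hT hI
    have hTv := hT (v, w) (Finset.mk_mem_product hv hw)
    have hIv := mul_le_mul_of_nonneg_left (hI v hv) (sub_nonneg.2 hMDP.γ_lt_one.le)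
    rw [empLag_eq_mean, Lag_eq_integral hMDP, add_sub_add_comm, ← mul_sub, epsStat, mul_assoc]
    refine (abs_add_le _ _).trans (add_le_add ?_ hTv)
    rwa [abs_mul, abs_of_nonneg (sub_nonneg.2 hMDP.γ_lt_one.le)]
  have hbad : (dataMeasure P dD μ0 n n0).real goodᶜ ≤ δ := by
    calc _ ≤ _ := measureReal_mono hsub
      _ ≤ _ := measureReal_union_le _ _
      _ ≤ δ / 2 + δ / 2 := by
          refine add_le_add ?_ ?_ <;>
            simpa only [dataMeasure, measureReal_prod_prod, probReal_univ, mul_one, one_mul]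
      _ = δ := add_halves δ
  have hmeas : MeasurableSet good := .of_discrete
  rw [tsub_le_iff_left, ← prob_add_prob_compl (μ := dataMeasure P dD μ0 n n0) hmeas, add_comm]
  gcongr
  rwa [← ofReal_measureReal, ENNReal.ofReal_le_ofReal_iff hδ0.le]
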